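/- A family of Killing graphs X(t,x) = ϑ(u(x,t),x) evolves by the flow ∂X/∂t = (nH − 𝓗)N if and only if u satisfies the quasilinear parabolic equation ∂u/∂t = W div(∇u/W) − W𝓗 − γ⟨∇̄_Y Y, ∇u⟩, equivalently ∂u/∂t = (σ^{ij} − u^i u^j/W²) u_{i;j} − ((2γ + |∇u|²)/W²)⟨∇γ/(2γ), ∇u⟩ − W𝓗; indeed nH − 𝓗 = ⟨∂X/∂t, N⟩ = (1/W)∂u/∂t. -/

import Mathlib

/-!
Formalization of the setting of "Mean curvature flow of Killing graphs"
(Lira–Wanderley).  The integral leaf `P` of the distribution orthogonal to the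
Killing field `Y` is presented in coordinates as `ℝⁿ` (points `Fin n → ℝ`)
carrying a Riemannian metric `σ`; the ambient manifold is the warped product
`M = P ×_{1/√γ} ℝ` with coordinates `(x⁰ = s, x)` and metric
`ḡ = σ + (1/γ) ds²`, where `γ = 1/|Y|²` and `Y = ∂/∂x⁰`.  All geometric
quantities (Christoffel symbols, second fundamental form and mean curvature of
a Killing graph, ambient Ricci curvature, …) are defined concretely from this
data.
-/

noncomputable section

open Real MeasureTheory Filter Topology

namespace KMCF

variable {n : ℕ}

/-- Partial derivative of a function on the coordinate chart of the leaf `P`. -/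
def pd (f : (Fin n → ℝ) → ℝ) (i : Fin n) (x : Fin n → ℝ) : ℝ :=
  fderiv ℝ f x (Pi.single i 1)

/-- Component of an ambient tangent vector `(v⁰, vⁱ)` of `M = P ×_{1/√γ} ℝ`. -/
def vComp (v : ℝ × (Fin n → ℝ)) (a : Fin (n + 1)) : ℝ :=
  if ha : a = 0 then v.1 else v.2 (a.pred ha)

/-- Ambient partial derivative (nothing depends on the flow parameter `x⁰`). -/
def ambPd (f : (Fin n → ℝ) → ℝ) (a : Fin (n + 1)) (x : Fin n → ℝ) : ℝ :=
  if ha : a = 0 then 0 else pd f (a.pred ha) x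

/-- Coordinate tangent vectors `X_* ∂_i = ∂_i + u_i ∂_0` of the Killing graph
`X(x) = ϑ(u(x), x)`. -/
def tangentV (u : (Fin n → ℝ) → ℝ) (i : Fin n) (x : Fin n → ℝ) : ℝ × (Fin n → ℝ) :=
  (pd u i x, Pi.single i 1)

/-- Coordinate data of the integral leaf `P`: the metric `σ`, its inverse, and
the warping function `γ = 1/|Y|²` of the Killing field `Y`. -/
structure LeafData (n : ℕ) where
  σ : (Fin n → ℝ) → Fin n → Fin n → ℝ
  σInv : (Fin n → ℝ) → Fin n → Fin n → ℝ
  γ : (Fin n → ℝ) → ℝ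
  σ_symm : ∀ x i j, σ x i j = σ x j i
  σ_posdef : ∀ x (v : Fin n → ℝ), v ≠ 0 → 0 < ∑ i, ∑ j, σ x i j * v i * v j
  σInv_mul_σ : ∀ x i j, (∑ k, σInv x i k * σ x k j) = if i = j then (1 : ℝ) else 0
  σ_smooth : ∀ i j, ContDiff ℝ (⊤ : ℕ∞) fun x => σ x i j
  γ_pos : ∀ x, 0 < γ x
  γ_smooth : ContDiff ℝ (⊤ : ℕ∞) γ

namespace LeafData

variable (D : LeafData n)

/-- Christoffel symbols `Γ^k_{ij}` of the leaf metric `σ`. -/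
def Γc (x : Fin n → ℝ) (i j k : Fin n) : ℝ :=
  (1 / 2) * ∑ l, D.σInv x k l *
    (pd (fun y => D.σ y j l) i x + pd (fun y => D.σ y i l) j x -
      pd (fun y => D.σ y i j) l x)

/-- Covariant Hessian `f_{i;j}` in `P`. -/
def hess (f : (Fin n → ℝ) → ℝ) (i j : Fin n) (x : Fin n → ℝ) : ℝ :=
  pd (pd f j) i x - ∑ k, D.Γc x i j k * pd f k x

/-- Raised gradient components `f^i = σ^{ij} f_j`. -/
def gradUp (f : (Fin n → ℝ) → ℝ) (i : Fin n) (x : Fin n → ℝ) : ℝ :=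
  ∑ j, D.σInv x i j * pd f j x

/-- Inner product `⟨∇f, ∇g⟩` of gradients in `P`. -/
def inner2 (f g : (Fin n → ℝ) → ℝ) (x : Fin n → ℝ) : ℝ :=
  ∑ i, ∑ j, D.σInv x i j * pd f i x * pd g j x

/-- `|∇u|²`. -/
def gradSq (u : (Fin n → ℝ) → ℝ) (x : Fin n → ℝ) : ℝ := D.inner2 u u x

/-- `W = √(γ + |∇u|²)`. -/
def Wf (u : (Fin n → ℝ) → ℝ) (x : Fin n → ℝ) : ℝ :=
  Real.sqrt (D.γ x + D.gradSq u x)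

/-- Divergence in `P` of a vector field with raised components `Z^i`. -/
def divP (Z : Fin n → (Fin n → ℝ) → ℝ) (x : Fin n → ℝ) : ℝ :=
  ∑ i, (pd (Z i) i x + ∑ k, D.Γc x i k i * Z k x)

/-- Divergence in the ambient warped product `M = P ×_{1/√γ} ℝ` of an
`s`-independent horizontal vector field (`Γ̄⁰_{0i} = −γ_i/(2γ)`). -/
def divM (Z : Fin n → (Fin n → ℝ) → ℝ) (x : Fin n → ℝ) : ℝ :=
  D.divP Z x - ∑ i, (pd D.γ i x / (2 * D.γ x)) * Z i x

/-- The ambient warped-product metric `ḡ` of `M` in the coordinates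
`(x⁰ = s, x)`:  `ḡ₀₀ = 1/γ`, `ḡ₀ᵢ = 0`, `ḡᵢⱼ = σᵢⱼ`. -/
def ambG (x : Fin n → ℝ) (a b : Fin (n + 1)) : ℝ :=
  if ha : a = 0 then (if b = 0 then 1 / D.γ x else 0)
  else if hb : b = 0 then 0 else D.σ x (a.pred ha) (b.pred hb)

/-- The inverse ambient metric. -/
def ambGInv (x : Fin n → ℝ) (a b : Fin (n + 1)) : ℝ :=
  if ha : a = 0 then (if b = 0 then D.γ x else 0)
  else if hb : b = 0 then 0 else D.σInv x (a.pred ha) (b.pred hb)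

/-- Ambient Christoffel symbols `Γ̄^a_{bc}` of the warped-product metric. -/
def ambΓ (x : Fin n → ℝ) (a b c : Fin (n + 1)) : ℝ :=
  (1 / 2) * ∑ e, D.ambGInv x a e *
    (ambPd (fun y => D.ambG y b e) c x + ambPd (fun y => D.ambG y c e) b x -
      ambPd (fun y => D.ambG y b c) e x)

/-- Ambient curvature tensor `R̄^a_{bcd}`. -/
def ambRiem (x : Fin n → ℝ) (a b c d : Fin (n + 1)) : ℝ :=
  ambPd (fun y => D.ambΓ y a d b) c x - ambPd (fun y => D.ambΓ y a c b) d x +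
    (∑ e, D.ambΓ x a c e * D.ambΓ x e d b) -
    ∑ e, D.ambΓ x a d e * D.ambΓ x e c b

/-- Ambient Ricci curvature as a bilinear form on tangent vectors of `M`. -/
def Ric (x : Fin n → ℝ) (v w : ℝ × (Fin n → ℝ)) : ℝ :=
  ∑ b, ∑ c, (∑ a, D.ambRiem x a b a c) * vComp v b * vComp w c

/-- The ambient Riemannian inner product `⟨·,·⟩` at `x`. -/
def ambInner (x : Fin n → ℝ) (v w : ℝ × (Fin n → ℝ)) : ℝ :=
  ∑ a, ∑ b, D.ambG x a b * vComp v a * vComp w b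

/-- Ambient covariant derivative `∇̄_v Z` of an `s`-independent vector field
`Z` in the direction of the tangent vector `v` at `x`. -/
def ambCov (Z : (Fin n → ℝ) → ℝ × (Fin n → ℝ)) (v : ℝ × (Fin n → ℝ))
    (x : Fin n → ℝ) : ℝ × (Fin n → ℝ) :=
  ((∑ i, v.2 i * pd (fun y => (Z y).1) i x) +
      ∑ b, ∑ c, D.ambΓ x 0 b c * vComp v b * vComp (Z x) c,
    fun k =>
      (∑ i, v.2 i * pd (fun y => (Z y).2 k) i x) +
        ∑ b, ∑ c, D.ambΓ x k.succ b c * vComp v b * vComp (Z x) c)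

/-- The unit normal `N = (1/W)(γ Y − ϑ_* ∇u)` of the Killing graph. -/
def normalN (u : (Fin n → ℝ) → ℝ) (x : Fin n → ℝ) : ℝ × (Fin n → ℝ) :=
  (D.γ x / D.Wf u x, fun k => -D.gradUp u k x / D.Wf u x)

/-- Second fundamental form `a_{ij} = ⟨∇̄_{X_*∂_i} X_*∂_j, N⟩` of the graph. -/
def sff (u : (Fin n → ℝ) → ℝ) (i j : Fin n) (x : Fin n → ℝ) : ℝ :=
  D.ambInner x (D.ambCov (fun y => tangentV u j y) (tangentV u i x) x)
    (D.normalN u x)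

/-- Induced metric `g_{ij} = σ_{ij} + u_i u_j / γ` of the graph. -/
def gmet (u : (Fin n → ℝ) → ℝ) (x : Fin n → ℝ) (i j : Fin n) : ℝ :=
  D.σ x i j + pd u i x * pd u j x / D.γ x

/-- Inverse induced metric `g^{ij} = σ^{ij} − u^i u^j / W²`. -/
def gInv (u : (Fin n → ℝ) → ℝ) (x : Fin n → ℝ) (i j : Fin n) : ℝ :=
  D.σInv x i j - D.gradUp u i x * D.gradUp u j x / (D.Wf u x) ^ 2

/-- `n` times the mean curvature of the graph: `nH = g^{ij} a_{ij}`. -/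
def nH (u : (Fin n → ℝ) → ℝ) (x : Fin n → ℝ) : ℝ :=
  ∑ i, ∑ j, D.gInv u x i j * D.sff u i j x

/-- Christoffel symbols of the induced metric of the graph. -/
def Γg (u : (Fin n → ℝ) → ℝ) (x : Fin n → ℝ) (i j k : Fin n) : ℝ :=
  (1 / 2) * ∑ l, D.gInv u x k l *
    (pd (fun y => D.gmet u y j l) i x + pd (fun y => D.gmet u y i l) j x -
      pd (fun y => D.gmet u y i j) l x)

/-- Covariant derivative `∇_k T_{ij}` in `P` of a 2-tensor. -/
def covP2 (T : Fin n → Fin n → (Fin n → ℝ) → ℝ) (k i j : Fin n)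
    (x : Fin n → ℝ) : ℝ :=
  pd (T i j) k x - ∑ l, D.Γc x k i l * T l j x - ∑ l, D.Γc x k j l * T i l x

/-- Covariant derivative `∇^Σ_k T_{ij}` on the graph of a 2-tensor. -/
def covG2 (u : (Fin n → ℝ) → ℝ) (T : Fin n → Fin n → (Fin n → ℝ) → ℝ)
    (k i j : Fin n) (x : Fin n → ℝ) : ℝ :=
  pd (T i j) k x - ∑ l, D.Γg u x k i l * T l j x - ∑ l, D.Γg u x k j l * T i l x

/-- Components of the gradient on `Σ` of a function of `x`. -/
def gradG (u f : (Fin n → ℝ) → ℝ) (j : Fin n) (x : Fin n → ℝ) : ℝ :=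
  ∑ k, D.gInv u x j k * pd f k x

/-- Components, in the basis `X_*∂_i`, of the tangential projection `Y^T`
of the Killing field:  `Y^T = (u^i/W²) X_*∂_i`. -/
def YTc (u : (Fin n → ℝ) → ℝ) (i : Fin n) (x : Fin n → ℝ) : ℝ :=
  D.gradUp u i x / (D.Wf u x) ^ 2

/-- Squared norm `|A|²` of the second fundamental form. -/
def Anorm2 (u : (Fin n → ℝ) → ℝ) (x : Fin n → ℝ) : ℝ :=
  ∑ i, ∑ j, ∑ k, ∑ l,
    D.gInv u x i k * D.gInv u x j l * D.sff u i j x * D.sff u k l x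

/-- Mixed components `a_i^j = g^{jk} a_{ik}` of the Weingarten map. -/
def aMix (u : (Fin n → ℝ) → ℝ) (i j : Fin n) (x : Fin n → ℝ) : ℝ :=
  ∑ k, D.gInv u x j k * D.sff u i k x

/-- Raised spatial components `N^j = −u^j/W` of the unit normal. -/
def NupS (u : (Fin n → ℝ) → ℝ) (j : Fin n) (x : Fin n → ℝ) : ℝ :=
  -D.gradUp u j x / D.Wf u x

/-- The support-type function `θ = ⟨∇d, N⟩`. -/
def theta (u d : (Fin n → ℝ) → ℝ) (x : Fin n → ℝ) : ℝ :=
  D.ambInner x ((0 : ℝ), fun k => D.gradUp d k x) (D.normalN u x)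

/-- `κ = ⟨γ ∇̄_Y Y, ∇d⟩ = ⟨∇γ, ∇d⟩/(2γ)`. -/
def kappa (d : (Fin n → ℝ) → ℝ) (x : Fin n → ℝ) : ℝ :=
  D.inner2 D.γ d x / (2 * D.γ x)

/-- The Korevaar auxiliary function `h = 1 + α d − ϕ ⟨∇d, N⟩`. -/
def hKor (u d ϕ : (Fin n → ℝ) → ℝ) (α : ℝ) (x : Fin n → ℝ) : ℝ :=
  1 + α * d x - ϕ x * D.theta u d x

/-- `η = e^{Ku} h`. -/
def etaKor (u d ϕ : (Fin n → ℝ) → ℝ) (K α : ℝ) (x : Fin n → ℝ) : ℝ :=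
  Real.exp (K * u x) * D.hKor u d ϕ α x

/-- Riemannian integral over `Ω ⊆ P` (density `√(det σ)`). -/
def intP (Ω : Set (Fin n → ℝ)) (f : (Fin n → ℝ) → ℝ) : ℝ :=
  ∫ x in Ω, f x * Real.sqrt (Matrix.det (Matrix.of fun i j => D.σ x i j))

/-- The nonparametric mean curvature flow equation (23):
`u_t = (σ^{ij} − u^i u^j/W²) u_{i;j} − (1/(2γ) + 1/(2W²)) γ^i u_i − W𝓗`. -/
def SolvesFlowOn (Ω : Set (Fin n → ℝ)) (J : Set ℝ) (𝓗 : (Fin n → ℝ) → ℝ)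
    (u : (Fin n → ℝ) → ℝ → ℝ) : Prop :=
  ∀ x ∈ Ω, ∀ t ∈ J,
    deriv (u x) t =
      (∑ i, ∑ j, D.gInv (fun y => u y t) x i j * D.hess (fun y => u y t) i j x) -
        (1 / (2 * D.γ x) + 1 / (2 * (D.Wf (fun y => u y t) x) ^ 2)) *
          D.inner2 D.γ (fun y => u y t) x -
        D.Wf (fun y => u y t) x * 𝓗 x

/-- The divergence form (21) of the flow equation:
`u_t = W div(∇u/W) − W𝓗 − γ⟨∇̄_Y Y, ∇u⟩`. -/
def SolvesFlowDivOn (Ω : Set (Fin n → ℝ)) (J : Set ℝ) (𝓗 : (Fin n → ℝ) → ℝ)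
    (u : (Fin n → ℝ) → ℝ → ℝ) : Prop :=
  ∀ x ∈ Ω, ∀ t ∈ J,
    deriv (u x) t =
      D.Wf (fun y => u y t) x *
          D.divP (fun i y => D.gradUp (fun z => u z t) i y /
            D.Wf (fun z => u z t) y) x -
        D.Wf (fun y => u y t) x * 𝓗 x -
        D.γ x * (D.inner2 D.γ (fun y => u y t) x / (2 * (D.γ x) ^ 2))

/-- The Neumann condition `⟨N, ν⟩ = ϕ` on `∂Ω`. -/
def NeumannOn (Ω : Set (Fin n → ℝ)) (J : Set ℝ) (ν : (Fin n → ℝ) → Fin n → ℝ)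
    (ϕ : (Fin n → ℝ) → ℝ) (u : (Fin n → ℝ) → ℝ → ℝ) : Prop :=
  ∀ x ∈ frontier Ω, ∀ t ∈ J,
    D.ambInner x (D.normalN (fun y => u y t) x) ((0 : ℝ), ν x) = ϕ x

/-- The stationary prescribed mean curvature equation (5) with the prescribed
contact angle condition (6). -/
def SolvesStationary (Ω : Set (Fin n → ℝ)) (ν : (Fin n → ℝ) → Fin n → ℝ)
    (𝓗 ϕ : (Fin n → ℝ) → ℝ) (v : (Fin n → ℝ) → ℝ) : Prop :=
  (∀ x ∈ Ω,
      D.divP (fun i y => D.gradUp v i y / D.Wf v y) x -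
          D.γ x * (D.inner2 D.γ v x / (2 * (D.γ x) ^ 2 * D.Wf v x)) = 𝓗 x) ∧
    ∀ x ∈ frontier Ω, D.ambInner x (D.normalN v x) ((0 : ℝ), ν x) = ϕ x

/-- The translating-soliton equation (41) with Neumann condition (42). -/
def SolvesSoliton (Ω : Set (Fin n → ℝ)) (ν : (Fin n → ℝ) → Fin n → ℝ)
    (𝓗 ϕ : (Fin n → ℝ) → ℝ) (C : ℝ) (v : (Fin n → ℝ) → ℝ) : Prop :=
  (∀ x ∈ Ω,
      D.divP (fun i y => D.gradUp v i y / D.Wf v y) x -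
          D.γ x * (D.inner2 D.γ v x / (2 * (D.γ x) ^ 2 * D.Wf v x)) =
        𝓗 x + C / D.Wf v x) ∧
    ∀ x ∈ frontier Ω, D.ambInner x (D.normalN v x) ((0 : ℝ), ν x) = ϕ x

end LeafData

end KMCF

namespace KMCF

open LeafData

lemma pd_mul' {n : ℕ} {f g : (Fin n → ℝ) → ℝ} {x : Fin n → ℝ} (i : Fin n)
    (hf : DifferentiableAt ℝ f x) (hg : DifferentiableAt ℝ g x) :
    pd (fun y => f y * g y) i x = pd f i x * g x + f x * pd g i x := by
  unfold pd
  rw [fderiv_fun_mul hf hg]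
  simp; ring

lemma pd_sum' {n : ℕ} {ι : Type*} [Fintype ι] {f : ι → (Fin n → ℝ) → ℝ} {x : Fin n → ℝ}
    (i : Fin n) (hf : ∀ a, DifferentiableAt ℝ (f a) x) :
    pd (fun y => ∑ a, f a y) i x = ∑ a, pd (f a) i x := by
  unfold pd
  rw [fderiv_fun_sum (fun a _ => hf a)]
  simp

lemma pd_add' {n : ℕ} {f g : (Fin n → ℝ) → ℝ} {x : Fin n → ℝ} (i : Fin n)
    (hf : DifferentiableAt ℝ f x) (hg : DifferentiableAt ℝ g x) :
    pd (fun y => f y + g y) i x = pd f i x + pd g i x := by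
  unfold pd
  rw [fderiv_fun_add hf hg]
  simp

lemma pd_const' {n : ℕ} (c : ℝ) (x : Fin n → ℝ) (i : Fin n) :
    pd (fun _ => c) i x = 0 := by
  unfold pd
  simp

lemma pd_sqrt' {n : ℕ} {f : (Fin n → ℝ) → ℝ} {x : Fin n → ℝ} (i : Fin n)
    (hf : DifferentiableAt ℝ f x) (h0 : f x ≠ 0) :
    pd (fun y => Real.sqrt (f y)) i x = pd f i x / (2 * Real.sqrt (f x)) := by
  unfold pd
  rw [(hf.hasFDerivAt.sqrt h0).fderiv]
  simp; ring

lemma pd_inv' {n : ℕ} {f : (Fin n → ℝ) → ℝ} {x : Fin n → ℝ} (i : Fin n)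
    (hf : DifferentiableAt ℝ f x) (h0 : f x ≠ 0) :
    pd (fun y => (f y)⁻¹) i x = - pd f i x / (f x) ^ 2 := by
  unfold pd
  have := (hasDerivAt_inv h0).comp_hasFDerivAt x hf.hasFDerivAt
  have h2 : fderiv ℝ (fun y => (f y)⁻¹) x = _ := this.fderiv
  rw [h2]
  simp; ring

lemma smooth_pd {n : ℕ} {f : (Fin n → ℝ) → ℝ} (hf : ContDiff ℝ (⊤ : ℕ∞) f) (i : Fin n) :
    ContDiff ℝ (⊤ : ℕ∞) (pd f i) := by
  unfold pd
  exact (hf.fderiv_right (m := (⊤ : ℕ∞)) (by simp)).clm_apply contDiff_const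

lemma sInv_eq {n : ℕ} (D : LeafData n) (x : Fin n → ℝ) :
    Matrix.of (D.σInv x) * Matrix.of (D.σ x) = 1 := by
  ext i j
  simp [Matrix.mul_apply, D.σInv_mul_σ, Matrix.one_apply]

lemma mul_sInv {n : ℕ} (D : LeafData n) (x : Fin n → ℝ) (i j : Fin n) :
    ∑ k, D.σ x i k * D.σInv x k j = if i = j then (1 : ℝ) else 0 := by
  have h := mul_eq_one_comm.mp (sInv_eq D x)
  have := congrFun (congrFun h i) j
  simpa [Matrix.mul_apply, Matrix.one_apply] using this

lemma sInv_symm {n : ℕ} (D : LeafData n) (x : Fin n → ℝ) (i j : Fin n) :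
    D.σInv x i j = D.σInv x j i := by
  have h := sInv_eq D x
  have ht : (Matrix.of (D.σ x)).transpose = Matrix.of (D.σ x) := by
    ext a b; simp [D.σ_symm x b a]
  have h1 : Matrix.of (D.σ x) * (Matrix.of (D.σInv x)).transpose = 1 := by
    have := congrArg Matrix.transpose h
    rwa [Matrix.transpose_mul, ht, Matrix.transpose_one] at this
  have h2 := left_inv_eq_right_inv h h1
  exact congrFun (congrFun h2 i) j

lemma det_smooth {n : ℕ} {A : (Fin n → ℝ) → Matrix (Fin n) (Fin n) ℝ}
    (hA : ∀ i j, Differentiable ℝ (fun x => A x i j)) :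
    Differentiable ℝ (fun x => (A x).det) := by
  simp only [Matrix.det_apply]
  fun_prop

lemma sInv_diff {n : ℕ} (D : LeafData n) (i j : Fin n) :
    Differentiable ℝ (fun x => D.σInv x i j) := by
  have hσ : ∀ i j, Differentiable ℝ (fun x => D.σ x i j) := fun i j =>
    (D.σ_smooth i j).differentiable (by simp)
  have hd : ∀ x, (Matrix.of (D.σ x)).det ≠ 0 := by
    intro x h0
    have := congrArg Matrix.det (sInv_eq D x)
    rw [Matrix.det_mul, h0] at this
    simp at this
  have he : (fun x => D.σInv x i j) = fun x =>
      ((Matrix.of (D.σ x)).det)⁻¹ * (Matrix.of (D.σ x)).adjugate i j := by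
    funext x
    have h1 : Matrix.of (D.σInv x) = (Matrix.of (D.σ x))⁻¹ :=
      (Matrix.inv_eq_left_inv (sInv_eq D x)).symm
    have := congrFun (congrFun h1 i) j
    rw [Matrix.inv_def] at this
    simpa using this
  rw [he]
  refine Differentiable.mul (Differentiable.inv (det_smooth (fun i j => hσ i j)) hd) ?_
  simp only [Matrix.adjugate_apply]
  refine det_smooth (fun a b => ?_)
  by_cases hab : a = j
  · subst hab; simp
  · simp only [Matrix.updateRow_ne hab]; exact hσ a b

lemma pd_sInv {n : ℕ} (D : LeafData n) (x : Fin n → ℝ) (k a b : Fin n) :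
    pd (fun y => D.σInv y a b) k x =
      - ∑ c, ∑ d, D.σInv x a c * pd (fun y => D.σ y c d) k x * D.σInv x d b := by
  have hσ : ∀ i j, Differentiable ℝ (fun x => D.σ x i j) := fun i j =>
    (D.σ_smooth i j).differentiable (by simp)
  have h : ∀ d, ∑ c, (pd (fun y => D.σInv y a c) k x * D.σ x c d +
      D.σInv x a c * pd (fun y => D.σ y c d) k x) = 0 := by
    intro d
    have h1 : (fun y => ∑ c, D.σInv y a c * D.σ y c d) = fun _ => if a = d then (1 : ℝ) else 0 := by
      funext y; exact D.σInv_mul_σ y a d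
    have h2 := congrArg (fun f => pd f k x) h1
    simp only [pd_const'] at h2
    rw [pd_sum' k (fun c => ((sInv_diff D a c) x).fun_mul (hσ c d x))] at h2
    rw [← h2]
    refine Finset.sum_congr rfl fun c _ => ?_
    rw [pd_mul' k (sInv_diff D a c x) (hσ c d x)]
  have h3 : ∑ d, (∑ c, (pd (fun y => D.σInv y a c) k x * D.σ x c d +
      D.σInv x a c * pd (fun y => D.σ y c d) k x)) * D.σInv x d b = 0 := by
    simp [h]
  have h4 : ∑ d, (∑ c, pd (fun y => D.σInv y a c) k x * D.σ x c d) * D.σInv x d b =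
      pd (fun y => D.σInv y a b) k x := by
    simp only [Finset.sum_mul]
    rw [Finset.sum_comm]
    simp only [mul_assoc, ← Finset.mul_sum, mul_sInv]
    simp
  simp only [Finset.sum_add_distrib, add_mul] at h3
  rw [h4] at h3
  have h5 : ∑ d, (∑ c, D.σInv x a c * pd (fun y => D.σ y c d) k x) * D.σInv x d b =
     ∑ c, ∑ d, D.σInv x a c * pd (fun y => D.σ y c d) k x * D.σInv x d b := by
    simp only [Finset.sum_mul]
    rw [Finset.sum_comm]
  linarith

lemma gradSq_eq {n : ℕ} (D : LeafData n) (f : (Fin n → ℝ) → ℝ) (x : Fin n → ℝ) :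
    D.gradSq f x = ∑ i, D.gradUp f i x * pd f i x := by
  simp only [LeafData.gradSq, LeafData.inner2, LeafData.gradUp, Finset.sum_mul]
  exact Finset.sum_congr rfl fun i _ => Finset.sum_congr rfl fun j _ => by ring

lemma inner2_eq {n : ℕ} (D : LeafData n) (g f : (Fin n → ℝ) → ℝ) (x : Fin n → ℝ) :
    D.inner2 g f x = ∑ i, D.gradUp f i x * pd g i x := by
  simp only [LeafData.inner2, LeafData.gradUp, Finset.sum_mul]
  exact Finset.sum_congr rfl fun i _ => Finset.sum_congr rfl fun j _ => by ring

lemma lower_gradUp {n : ℕ} (D : LeafData n) (f : (Fin n → ℝ) → ℝ) (x : Fin n → ℝ) (i : Fin n) :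
    ∑ k, D.σ x i k * D.gradUp f k x = pd f i x := by
  simp only [LeafData.gradUp, Finset.mul_sum]
  rw [Finset.sum_comm]
  simp only [← mul_assoc, ← Finset.sum_mul, mul_sInv]
  simp

lemma gradSq_nonneg {n : ℕ} (D : LeafData n) (f : (Fin n → ℝ) → ℝ) (x : Fin n → ℝ) :
    0 ≤ D.gradSq f x := by
  have h : D.gradSq f x = ∑ i, ∑ j, D.σ x i j * D.gradUp f i x * D.gradUp f j x := by
    rw [gradSq_eq]
    refine Finset.sum_congr rfl fun i _ => ?_
    rw [← lower_gradUp D f x i, Finset.mul_sum]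
    exact Finset.sum_congr rfl fun j _ => by ring
  rw [h]
  by_cases h0 : (fun i => D.gradUp f i x) = 0
  · have h0' : ∀ i, D.gradUp f i x = 0 := fun i => congrFun h0 i
    simp [h0']
  · exact (D.σ_posdef x _ h0).le

lemma Wf_sq {n : ℕ} (D : LeafData n) (f : (Fin n → ℝ) → ℝ) (x : Fin n → ℝ) :
    D.Wf f x ^ 2 = D.γ x + D.gradSq f x :=
  Real.sq_sqrt (add_nonneg (D.γ_pos x).le (gradSq_nonneg D f x))

lemma Wf_pos {n : ℕ} (D : LeafData n) (f : (Fin n → ℝ) → ℝ) (x : Fin n → ℝ) :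
    0 < D.Wf f x :=
  Real.sqrt_pos.mpr (add_pos_of_pos_of_nonneg (D.γ_pos x) (gradSq_nonneg D f x))

lemma ambInner_eq {n : ℕ} (D : LeafData n) (x : Fin n → ℝ) (v w : ℝ × (Fin n → ℝ)) :
    D.ambInner x v w = v.1 * w.1 / D.γ x + ∑ i, ∑ j, D.σ x i j * v.2 i * w.2 j := by
  simp only [LeafData.ambInner, Fin.sum_univ_succ, LeafData.ambG, vComp]
  simp [Fin.succ_ne_zero]
  ring

lemma ambInner_N {n : ℕ} (D : LeafData n) (f : (Fin n → ℝ) → ℝ) (x : Fin n → ℝ)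
    (v : ℝ × (Fin n → ℝ)) :
    D.ambInner x v (D.normalN f x) = (v.1 - ∑ i, pd f i x * v.2 i) / D.Wf f x := by
  have hW := (Wf_pos D f x).ne'
  have hγ := (D.γ_pos x).ne'
  have h : ∑ i, ∑ j, D.σ x i j * v.2 i * (-D.gradUp f j x / D.Wf f x) =
      - (∑ i, pd f i x * v.2 i) / D.Wf f x := by
    rw [← Finset.sum_neg_distrib, Finset.sum_div]
    refine Finset.sum_congr rfl fun i _ => ?_
    rw [← lower_gradUp D f x i, Finset.sum_mul, ← Finset.sum_neg_distrib, Finset.sum_div]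
    exact Finset.sum_congr rfl fun j _ => by ring
  rw [ambInner_eq]
  simp only [LeafData.normalN]
  rw [h]
  field_simp
  ring

lemma pd_inv_γ {n : ℕ} (D : LeafData n) (x : Fin n → ℝ) (i : Fin n) :
    pd (fun y => (D.γ y)⁻¹) i x = - pd D.γ i x / D.γ x ^ 2 :=
  pd_inv' i ((D.γ_smooth.differentiable (by simp)) x) (D.γ_pos x).ne'

lemma ambΓ_0ss {n : ℕ} (D : LeafData n) (x : Fin n → ℝ) (i j : Fin n) :
    D.ambΓ x 0 i.succ j.succ = 0 := by
  simp [LeafData.ambΓ, Fin.sum_univ_succ, LeafData.ambG, LeafData.ambGInv, ambPd, pd_const',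
    Fin.succ_ne_zero]

lemma ambΓ_00s {n : ℕ} (D : LeafData n) (x : Fin n → ℝ) (j : Fin n) :
    D.ambΓ x 0 0 j.succ = - pd D.γ j x / (2 * D.γ x) := by
  have hγ := (D.γ_pos x).ne'
  simp [LeafData.ambΓ, Fin.sum_univ_succ, LeafData.ambG, LeafData.ambGInv, ambPd, pd_const',
    Fin.succ_ne_zero, pd_inv_γ]
  field_simp

lemma ambΓ_0s0 {n : ℕ} (D : LeafData n) (x : Fin n → ℝ) (j : Fin n) :
    D.ambΓ x 0 j.succ 0 = - pd D.γ j x / (2 * D.γ x) := by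
  have hγ := (D.γ_pos x).ne'
  simp [LeafData.ambΓ, Fin.sum_univ_succ, LeafData.ambG, LeafData.ambGInv, ambPd, pd_const',
    Fin.succ_ne_zero, pd_inv_γ]
  field_simp

lemma ambΓ_000 {n : ℕ} (D : LeafData n) (x : Fin n → ℝ) :
    D.ambΓ x 0 0 0 = 0 := by
  simp [LeafData.ambΓ, Fin.sum_univ_succ, LeafData.ambG, LeafData.ambGInv, ambPd, pd_const',
    Fin.succ_ne_zero]

lemma ambΓ_s00 {n : ℕ} (D : LeafData n) (x : Fin n → ℝ) (k : Fin n) :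
    D.ambΓ x k.succ 0 0 = D.gradUp D.γ k x / (2 * D.γ x ^ 2) := by
  simp [LeafData.ambΓ, Fin.sum_univ_succ, LeafData.ambG, LeafData.ambGInv, ambPd, pd_const',
    Fin.succ_ne_zero, pd_inv_γ, LeafData.gradUp]
  rw [Finset.mul_sum, ← Finset.sum_neg_distrib, Finset.sum_div]
  exact Finset.sum_congr rfl fun j _ => by ring

lemma ambΓ_s0s {n : ℕ} (D : LeafData n) (x : Fin n → ℝ) (k i : Fin n) :
    D.ambΓ x k.succ 0 i.succ = 0 := by
  simp [LeafData.ambΓ, Fin.sum_univ_succ, LeafData.ambG, LeafData.ambGInv, ambPd, pd_const',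
    Fin.succ_ne_zero]

lemma ambΓ_ss0 {n : ℕ} (D : LeafData n) (x : Fin n → ℝ) (k i : Fin n) :
    D.ambΓ x k.succ i.succ 0 = 0 := by
  simp [LeafData.ambΓ, Fin.sum_univ_succ, LeafData.ambG, LeafData.ambGInv, ambPd, pd_const',
    Fin.succ_ne_zero]

lemma ambΓ_sss {n : ℕ} (D : LeafData n) (x : Fin n → ℝ) (k i j : Fin n) :
    D.ambΓ x k.succ i.succ j.succ = D.Γc x i j k := by
  simp [LeafData.ambΓ, Fin.sum_univ_succ, LeafData.ambG, LeafData.ambGInv, ambPd, pd_const',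
    Fin.succ_ne_zero, LeafData.Γc]
  refine Finset.sum_congr rfl fun l _ => ?_
  ring

lemma sff_eq {n : ℕ} (D : LeafData n) (f : (Fin n → ℝ) → ℝ) (x : Fin n → ℝ) (i j : Fin n) :
    D.sff f i j x = (D.hess f i j x
      - (pd D.γ j x * pd f i x + pd D.γ i x * pd f j x) / (2 * D.γ x)
      - D.inner2 D.γ f x * (pd f i x * pd f j x) / (2 * D.γ x ^ 2)) / D.Wf f x := by
  have hγ := (D.γ_pos x).ne'
  have hB : D.inner2 D.γ f x = ∑ k, pd f k x * D.gradUp D.γ k x := by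
    simp only [LeafData.inner2, LeafData.gradUp, Finset.mul_sum]
    rw [Finset.sum_comm]
    refine Finset.sum_congr rfl fun a _ => Finset.sum_congr rfl fun b _ => ?_
    rw [sInv_symm D x b a]; ring
  unfold LeafData.sff
  rw [ambInner_N]
  congr 1
  simp only [LeafData.ambCov, Fin.sum_univ_succ, ambΓ_0ss, ambΓ_00s, ambΓ_0s0, ambΓ_000,
    ambΓ_s00, ambΓ_s0s, ambΓ_ss0, ambΓ_sss, vComp, tangentV, pd_const']
  simp [Fin.succ_ne_zero, Pi.single_apply, LeafData.hess]
  rw [hB]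
  simp only [mul_add, Finset.sum_add_distrib]
  have e1 : ∑ k, pd f k x * (D.gradUp D.γ k x / (2 * D.γ x ^ 2) * pd f i x * pd f j x) =
      (∑ k, pd f k x * D.gradUp D.γ k x) * (pd f i x * pd f j x) / (2 * D.γ x ^ 2) := by
    rw [Finset.sum_mul, Finset.sum_div]
    exact Finset.sum_congr rfl fun j _ => by ring
  have e2 : ∑ k, pd f k x * D.Γc x i j k = ∑ k, D.Γc x i j k * pd f k x :=
    Finset.sum_congr rfl fun j _ => by ring
  rw [e1, e2]
  have e3 : pd (fun y => pd f j y) i x = pd (pd f j) i x := rfl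
  rw [e3]
  ring

lemma gInv_contr {n : ℕ} (D : LeafData n) (f : (Fin n → ℝ) → ℝ) (x : Fin n → ℝ)
    (b : Fin n → ℝ) :
    ∑ i, ∑ j, D.gInv f x i j * (pd f i x * b j) =
      D.γ x / D.Wf f x ^ 2 * ∑ j, D.gradUp f j x * b j := by
  have hW := (Wf_pos D f x).ne'
  rw [Finset.sum_comm, Finset.mul_sum]
  refine Finset.sum_congr rfl fun j _ => ?_
  have : ∑ i, D.gInv f x i j * (pd f i x * b j) =
      (∑ i, D.σInv x j i * pd f i x) * b j
        - (∑ i, D.gradUp f i x * pd f i x) * (D.gradUp f j x * b j) / D.Wf f x ^ 2 := by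
    rw [Finset.sum_mul, Finset.sum_mul, Finset.sum_div, ← Finset.sum_sub_distrib]
    refine Finset.sum_congr rfl fun i _ => ?_
    rw [LeafData.gInv, sInv_symm D x i j]; ring
  rw [this, ← gradSq_eq]
  change D.gradUp f j x * b j - _ = _
  have h2 := Wf_sq D f x
  field_simp
  rw [h2]
  ring

lemma gInv_symm {n : ℕ} (D : LeafData n) (f : (Fin n → ℝ) → ℝ) (x : Fin n → ℝ) (i j : Fin n) :
    D.gInv f x i j = D.gInv f x j i := by
  rw [LeafData.gInv, LeafData.gInv, sInv_symm D x i j]; ring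

lemma nH_eq {n : ℕ} (D : LeafData n) (f : (Fin n → ℝ) → ℝ) (x : Fin n → ℝ) :
    D.Wf f x * D.nH f x = (∑ i, ∑ j, D.gInv f x i j * D.hess f i j x) -
      (2 * D.γ x + D.gradSq f x) / D.Wf f x ^ 2 * (D.inner2 D.γ f x / (2 * D.γ x)) := by
  have hγ := (D.γ_pos x).ne'
  have hW := (Wf_pos D f x).ne'
  have hq := gInv_contr D f x (fun j => pd D.γ j x)
  have hp := gInv_contr D f x (fun j => pd f j x)
  rw [← inner2_eq] at hq
  rw [← gradSq_eq] at hp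
  have hq' : ∑ i, ∑ j, D.gInv f x i j * (pd D.γ i x * pd f j x) =
      ∑ i, ∑ j, D.gInv f x i j * (pd f i x * pd D.γ j x) := by
    rw [Finset.sum_comm]
    refine Finset.sum_congr rfl fun a _ => Finset.sum_congr rfl fun b _ => ?_
    rw [gInv_symm D f x b a]; ring
  have key : D.Wf f x * D.nH f x = (∑ i, ∑ j, D.gInv f x i j * D.hess f i j x)
      - ((∑ i, ∑ j, D.gInv f x i j * (pd f i x * pd D.γ j x)) +
         (∑ i, ∑ j, D.gInv f x i j * (pd D.γ i x * pd f j x))) / (2 * D.γ x)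
      - D.inner2 D.γ f x * (∑ i, ∑ j, D.gInv f x i j * (pd f i x * pd f j x))
          / (2 * D.γ x ^ 2) := by
    simp only [LeafData.nH, sff_eq, Finset.mul_sum, Finset.sum_div, ← Finset.sum_add_distrib,
      ← Finset.sum_sub_distrib]
    refine Finset.sum_congr rfl fun a _ => Finset.sum_congr rfl fun b _ => ?_
    field_simp
  rw [key, hq', hq, hp]
  field_simp
  ring

lemma gradUp_diff {n : ℕ} (D : LeafData n) {f : (Fin n → ℝ) → ℝ} (hf : ContDiff ℝ (⊤ : ℕ∞) f)
    (i : Fin n) : Differentiable ℝ (D.gradUp f i) := by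
  have h1 : ∀ j, Differentiable ℝ (pd f j) := fun j => (smooth_pd hf j).differentiable (by simp)
  have h2 := fun j => sInv_diff D i j
  unfold LeafData.gradUp
  fun_prop

lemma gradSq_diff {n : ℕ} (D : LeafData n) {f : (Fin n → ℝ) → ℝ} (hf : ContDiff ℝ (⊤ : ℕ∞) f) :
    Differentiable ℝ (D.gradSq f) := by
  have h1 : ∀ j, Differentiable ℝ (pd f j) := fun j => (smooth_pd hf j).differentiable (by simp)
  have h2 := fun i => gradUp_diff D hf i
  have : D.gradSq f = fun x => ∑ i, D.gradUp f i x * pd f i x := funext (gradSq_eq D f)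
  rw [this]
  fun_prop

lemma pd_gradUp {n : ℕ} (D : LeafData n) {f : (Fin n → ℝ) → ℝ} (hf : ContDiff ℝ (⊤ : ℕ∞) f)
    (i k : Fin n) (x : Fin n → ℝ) :
    pd (D.gradUp f i) k x = (∑ j, D.σInv x i j * pd (pd f j) k x)
      - ∑ c, ∑ d, D.σInv x i c * pd (fun y => D.σ y c d) k x * D.gradUp f d x := by
  have h1 : ∀ j, Differentiable ℝ (pd f j) := fun j => (smooth_pd hf j).differentiable (by simp)
  have e : pd (D.gradUp f i) k x = ∑ j, (pd (fun y => D.σInv y i j) k x * pd f j x +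
      D.σInv x i j * pd (pd f j) k x) := by
    unfold LeafData.gradUp
    rw [pd_sum' k (fun j => (sInv_diff D i j x).fun_mul (h1 j x))]
    exact Finset.sum_congr rfl fun j _ => pd_mul' k (sInv_diff D i j x) (h1 j x)
  rw [e, Finset.sum_add_distrib]
  have e2 : ∑ j, pd (fun y => D.σInv y i j) k x * pd f j x =
     - ∑ c, ∑ d, D.σInv x i c * pd (fun y => D.σ y c d) k x * D.gradUp f d x := by
    simp only [pd_sInv, LeafData.gradUp, Finset.mul_sum, neg_mul, Finset.sum_mul,
      Finset.sum_neg_distrib]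
    rw [Finset.sum_comm]
    congr 1
    refine Finset.sum_congr rfl fun c _ => ?_
    rw [Finset.sum_comm]
    refine Finset.sum_congr rfl fun d _ => Finset.sum_congr rfl fun j _ => ?_
    ring
  rw [e2]; ring

lemma pd_gradSq {n : ℕ} (D : LeafData n) {f : (Fin n → ℝ) → ℝ} (hf : ContDiff ℝ (⊤ : ℕ∞) f)
    (k : Fin n) (x : Fin n → ℝ) :
    pd (D.gradSq f) k x = 2 * (∑ j, D.gradUp f j x * pd (pd f j) k x)
      - ∑ c, ∑ d, D.gradUp f c x * pd (fun y => D.σ y c d) k x * D.gradUp f d x := by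
  have h1 : ∀ j, Differentiable ℝ (pd f j) := fun j => (smooth_pd hf j).differentiable (by simp)
  have h2 := fun i => gradUp_diff D hf i
  have : D.gradSq f = fun x => ∑ i, D.gradUp f i x * pd f i x := funext (gradSq_eq D f)
  rw [this, pd_sum' k (fun j => (h2 j x).fun_mul (h1 j x))]
  have e : ∀ a, pd (fun y => D.gradUp f a y * pd f a y) k x = _ := fun a =>
    pd_mul' k (h2 a x) (h1 a x)
  simp only [e, Finset.sum_add_distrib, pd_gradUp D hf, sub_mul, Finset.sum_sub_distrib]
  have e1 : ∑ a, (∑ j, D.σInv x a j * pd (pd f j) k x) * pd f a x =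
      ∑ j, D.gradUp f j x * pd (pd f j) k x := by
    simp only [Finset.sum_mul, LeafData.gradUp]
    rw [Finset.sum_comm]
    refine Finset.sum_congr rfl fun c _ => Finset.sum_congr rfl fun d _ => ?_
    rw [sInv_symm D x d c]; ring
  have e2 : ∑ a, (∑ c, ∑ d, D.σInv x a c * pd (fun y => D.σ y c d) k x * D.gradUp f d x)
        * pd f a x =
      ∑ c, ∑ d, D.gradUp f c x * pd (fun y => D.σ y c d) k x * D.gradUp f d x := by
    simp only [Finset.sum_mul]
    rw [Finset.sum_comm]
    refine Finset.sum_congr rfl fun c _ => ?_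
    rw [Finset.sum_comm]
    refine Finset.sum_congr rfl fun d _ => ?_
    have e3 : D.gradUp f c x = ∑ j, D.σInv x c j * pd f j x := rfl
    rw [e3, Finset.sum_mul, Finset.sum_mul]
    refine Finset.sum_congr rfl fun a _ => ?_
    rw [sInv_symm D x a c]; ring
  rw [e1, e2]; ring

lemma sym3 {n : ℕ} (F : Fin n → Fin n → Fin n → ℝ) :
    ∑ i, ∑ j, ∑ k, F i j k = ∑ i, ∑ j, ∑ k, F j i k := by
  rw [Finset.sum_comm]

lemma Γ_lower {n : ℕ} (D : LeafData n) (f : (Fin n → ℝ) → ℝ) (x : Fin n → ℝ) (i j : Fin n) :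
    ∑ k, D.Γc x i j k * pd f k x = (1 / 2) * ∑ l, D.gradUp f l x *
      (pd (fun y => D.σ y j l) i x + pd (fun y => D.σ y i l) j x -
      pd (fun y => D.σ y i j) l x) := by
  simp only [LeafData.Γc, LeafData.gradUp, Finset.mul_sum, Finset.sum_mul]
  rw [Finset.sum_comm]
  refine Finset.sum_congr rfl fun c _ => Finset.sum_congr rfl fun d _ => ?_
  rw [sInv_symm D x d c]; ring

lemma lap_eq {n : ℕ} (D : LeafData n) {f : (Fin n → ℝ) → ℝ} (hf : ContDiff ℝ (⊤ : ℕ∞) f)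
    (x : Fin n → ℝ) :
    D.divP (D.gradUp f) x = ∑ i, ∑ j, D.σInv x i j * D.hess f i j x := by
  have hs : ∀ i c d, pd (fun y => D.σ y c d) i x = pd (fun y => D.σ y d c) i x := by
    intro i c d
    congr 1; funext y; exact D.σ_symm y c d
  set A := ∑ i, ∑ c, ∑ d, D.σInv x i c * pd (fun y => D.σ y c d) i x * D.gradUp f d x with hA
  set B := ∑ i, ∑ c, ∑ d, D.σInv x i c * pd (fun y => D.σ y i c) d x * D.gradUp f d x with hB
  have hA' : ∑ i, ∑ c, ∑ d, D.σInv x i c * pd (fun y => D.σ y i d) c x * D.gradUp f d x = A := by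
    rw [hA, sym3]
    refine Finset.sum_congr rfl fun i _ => Finset.sum_congr rfl fun c _ =>
      Finset.sum_congr rfl fun d _ => ?_
    rw [sInv_symm D x c i]
  have hL : ∑ i, ∑ k, D.Γc x i k i * D.gradUp f k x = (1 / 2) * B := by
    have : ∑ i, ∑ k, D.Γc x i k i * D.gradUp f k x = (1 / 2) * (A + B - A) := by
      nth_rewrite 2 [← hA']
      rw [hA, hB]
      simp only [LeafData.Γc, Finset.mul_sum, Finset.sum_mul, ← Finset.sum_add_distrib,
        ← Finset.sum_sub_distrib]
      refine Finset.sum_congr rfl fun i _ => ?_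
      rw [Finset.sum_comm]
      refine Finset.sum_congr rfl fun c _ => Finset.sum_congr rfl fun d _ => ?_
      rw [hs i d c]; ring
    rw [this]; ring
  have hR : ∑ i, ∑ j, D.σInv x i j * D.hess f i j x =
      (∑ i, ∑ j, D.σInv x i j * pd (pd f j) i x) - (1 / 2) * (A + A - B) := by
    nth_rewrite 2 [← hA']
    rw [hA, hB]
    simp only [LeafData.hess, Γ_lower]
    simp only [Finset.mul_sum, ← Finset.sum_add_distrib,
        ← Finset.sum_sub_distrib, mul_sub]
    refine Finset.sum_congr rfl fun i _ => Finset.sum_congr rfl fun c _ => ?_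
    congr 1
    refine Finset.sum_congr rfl fun d _ => ?_
    ring
  rw [hR, LeafData.divP, Finset.sum_add_distrib, hL]
  simp only [pd_gradUp D hf, Finset.sum_sub_distrib]
  rw [← hA]; ring

lemma hessUU {n : ℕ} (D : LeafData n) {f : (Fin n → ℝ) → ℝ} (hf : ContDiff ℝ (⊤ : ℕ∞) f)
    (x : Fin n → ℝ) :
    ∑ i, D.gradUp f i x * pd (D.gradSq f) i x =
      2 * ∑ i, ∑ j, D.gradUp f i x * D.gradUp f j x * D.hess f i j x := by
  set A := ∑ i, ∑ c, ∑ d, D.gradUp f i x * D.gradUp f c x * D.gradUp f d x *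
    pd (fun y => D.σ y c d) i x with hA
  have hA1 : ∑ i, ∑ c, ∑ d, D.gradUp f i x * D.gradUp f c x * D.gradUp f d x *
    pd (fun y => D.σ y i d) c x = A := by
    rw [hA, sym3]
    refine Finset.sum_congr rfl fun i _ => Finset.sum_congr rfl fun c _ =>
      Finset.sum_congr rfl fun d _ => ?_
    ring
  have hA2 : ∑ i, ∑ c, ∑ d, D.gradUp f i x * D.gradUp f c x * D.gradUp f d x *
    pd (fun y => D.σ y i c) d x = A := by
    rw [← hA1]
    refine Finset.sum_congr rfl fun i _ => ?_
    rw [Finset.sum_comm]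
    refine Finset.sum_congr rfl fun c _ => Finset.sum_congr rfl fun d _ => ?_
    ring
  have hR : ∑ i, ∑ j, D.gradUp f i x * D.gradUp f j x * D.hess f i j x =
      (∑ i, ∑ j, D.gradUp f i x * D.gradUp f j x * pd (pd f j) i x)
        - (1 / 2) * (A + A - A) := by
    nth_rewrite 3 [← hA2]
    nth_rewrite 2 [← hA1]
    rw [hA]
    simp only [LeafData.hess, Γ_lower]
    simp only [Finset.mul_sum, ← Finset.sum_add_distrib,
        ← Finset.sum_sub_distrib, mul_sub]
    refine Finset.sum_congr rfl fun i _ => Finset.sum_congr rfl fun c _ => ?_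
    congr 1
    refine Finset.sum_congr rfl fun d _ => ?_
    ring
  have hL : ∑ i, D.gradUp f i x * pd (D.gradSq f) i x =
      2 * (∑ i, ∑ j, D.gradUp f i x * D.gradUp f j x * pd (pd f j) i x) - A := by
    rw [hA]
    simp only [pd_gradSq D hf, Finset.mul_sum, mul_sub, Finset.sum_sub_distrib]
    congr 1
    · refine Finset.sum_congr rfl fun i _ => Finset.sum_congr rfl fun c _ => ?_
      ring
    · refine Finset.sum_congr rfl fun i _ => Finset.sum_congr rfl fun c _ =>
        Finset.sum_congr rfl fun d _ => ?_
      ring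
  rw [hL, hR]; ring

lemma div_eq {n : ℕ} (D : LeafData n) {f : (Fin n → ℝ) → ℝ} (hf : ContDiff ℝ (⊤ : ℕ∞) f)
    (x : Fin n → ℝ) :
    D.Wf f x * D.divP (fun i y => D.gradUp f i y / D.Wf f y) x =
      (∑ i, ∑ j, D.gInv f x i j * D.hess f i j x) - D.inner2 D.γ f x / (2 * D.Wf f x ^ 2) := by
  have hW := (Wf_pos D f x).ne'
  have hγd : DifferentiableAt ℝ D.γ x := (D.γ_smooth.differentiable (by simp)) x
  have hGd := gradSq_diff D hf x
  have hsum : D.γ x + D.gradSq f x ≠ 0 := by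
    rw [← Wf_sq]; positivity
  have hWd : DifferentiableAt ℝ (D.Wf f) x := (hγd.fun_add hGd).sqrt hsum
  have hpW : ∀ i, pd (D.Wf f) i x = (pd D.γ i x + pd (D.gradSq f) i x) / (2 * D.Wf f x) := by
    intro i
    rw [← pd_add' i hγd hGd]
    exact pd_sqrt' i (hγd.fun_add hGd) hsum
  have hq : ∀ i, pd (fun y => D.gradUp f i y / D.Wf f y) i x =
      pd (D.gradUp f i) i x / D.Wf f x - D.gradUp f i x *
        (pd D.γ i x + pd (D.gradSq f) i x) / (2 * D.Wf f x ^ 3) := by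
    intro i
    simp only [div_eq_mul_inv]
    rw [pd_mul' i (gradUp_diff D hf i x) (hWd.fun_inv hW), pd_inv' i hWd hW, hpW]
    field_simp
    ring
  have e1 : D.Wf f x * D.divP (fun i y => D.gradUp f i y / D.Wf f y) x =
      D.divP (D.gradUp f) x - ((∑ i, D.gradUp f i x * pd D.γ i x)
        + ∑ i, D.gradUp f i x * pd (D.gradSq f) i x) / (2 * D.Wf f x ^ 2) := by
    simp only [LeafData.divP, hq]
    rw [← Finset.sum_add_distrib, Finset.sum_div, Finset.mul_sum, ← Finset.sum_sub_distrib]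
    refine Finset.sum_congr rfl fun i _ => ?_
    have : ∑ k, D.Γc x i k i * (D.gradUp f k x / D.Wf f x) =
        (∑ k, D.Γc x i k i * D.gradUp f k x) / D.Wf f x := by
      rw [Finset.sum_div]
      exact Finset.sum_congr rfl fun k _ => by ring
    rw [this]
    field_simp
    ring
  have e2 : ∑ i, ∑ j, D.gInv f x i j * D.hess f i j x =
      (∑ i, ∑ j, D.σInv x i j * D.hess f i j x) -
      (∑ i, ∑ j, D.gradUp f i x * D.gradUp f j x * D.hess f i j x) / D.Wf f x ^ 2 := by
    simp only [Finset.sum_div, ← Finset.sum_sub_distrib, LeafData.gInv]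
    refine Finset.sum_congr rfl fun i _ => Finset.sum_congr rfl fun j _ => ?_
    ring
  rw [e1, lap_eq D hf, hessUU D hf, ← inner2_eq, e2]
  field_simp
  ring


/-- A family of Killing graphs `X(t,x) = ϑ(u(x,t),x)` evolves
by the flow `∂X/∂t = (nH − 𝓗)N` (normal speed `⟨∂X/∂t, N⟩ = nH − 𝓗`, with
`∂X/∂t = u_t Y`) if and only if `u` satisfies the quasilinear parabolic
equation (21), equivalently (22); and along the flow
`nH − 𝓗 = ⟨∂X/∂t, N⟩ = (1/W) ∂u/∂t`. -/
theorem flow_iff_nonparametric_equation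
    {n : ℕ} (D : LeafData n) (Ω : Set (Fin n → ℝ))
    (hΩo : IsOpen Ω) (hΩb : Bornology.IsBounded Ω)
    (T : ℝ) (hT : 0 < T) (𝓗 : (Fin n → ℝ) → ℝ) (h𝓗 : ContDiff ℝ (⊤ : ℕ∞) 𝓗)
    (u : (Fin n → ℝ) → ℝ → ℝ)
    (hu : ContDiff ℝ (⊤ : ℕ∞) fun p : (Fin n → ℝ) × ℝ => u p.1 p.2) :
    ((∀ x ∈ Ω, ∀ t ∈ Set.Ico (0 : ℝ) T,
          D.ambInner x (deriv (u x) t, (0 : Fin n → ℝ))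
              (D.normalN (fun y => u y t) x) =
            D.nH (fun y => u y t) x - 𝓗 x) ↔
        D.SolvesFlowDivOn Ω (Set.Ico (0 : ℝ) T) 𝓗 u) ∧
      (D.SolvesFlowDivOn Ω (Set.Ico (0 : ℝ) T) 𝓗 u ↔
        (∀ x ∈ Ω, ∀ t ∈ Set.Ico (0 : ℝ) T,
          deriv (u x) t =
            (∑ i, ∑ j, D.gInv (fun y => u y t) x i j *
                D.hess (fun y => u y t) i j x) -
              (2 * D.γ x + D.gradSq (fun y => u y t) x) /
                  (D.Wf (fun y => u y t) x) ^ 2 *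
                (D.inner2 D.γ (fun y => u y t) x / (2 * D.γ x)) -
              D.Wf (fun y => u y t) x * 𝓗 x)) ∧
      ((∀ x ∈ Ω, ∀ t ∈ Set.Ico (0 : ℝ) T,
          D.ambInner x (deriv (u x) t, (0 : Fin n → ℝ))
              (D.normalN (fun y => u y t) x) =
            D.nH (fun y => u y t) x - 𝓗 x) →
        ∀ x ∈ Ω, ∀ t ∈ Set.Ico (0 : ℝ) T,
          D.nH (fun y => u y t) x - 𝓗 x =
            deriv (u x) t / D.Wf (fun y => u y t) x) := by
  have hsm : ∀ t, ContDiff ℝ (⊤ : ℕ∞) (fun y => u y t) := fun t =>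
    hu.comp (contDiff_id.prodMk contDiff_const)
  have hI : ∀ x t, D.ambInner x (deriv (u x) t, (0 : Fin n → ℝ))
      (D.normalN (fun y => u y t) x) = deriv (u x) t / D.Wf (fun y => u y t) x := by
    intro x t
    rw [ambInner_N]; simp
  have h1 : ∀ x t, (D.ambInner x (deriv (u x) t, (0 : Fin n → ℝ))
      (D.normalN (fun y => u y t) x) = D.nH (fun y => u y t) x - 𝓗 x) ↔
      deriv (u x) t =
            (∑ i, ∑ j, D.gInv (fun y => u y t) x i j *
                D.hess (fun y => u y t) i j x) -
              (2 * D.γ x + D.gradSq (fun y => u y t) x) /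
                  (D.Wf (fun y => u y t) x) ^ 2 *
                (D.inner2 D.γ (fun y => u y t) x / (2 * D.γ x)) -
              D.Wf (fun y => u y t) x * 𝓗 x := by
    intro x t
    rw [hI, ← nH_eq, div_eq_iff (Wf_pos D _ x).ne']
    constructor <;> intro h <;> rw [h] <;> ring
  have h2 : ∀ x t, D.Wf (fun y => u y t) x *
          D.divP (fun i y => D.gradUp (fun z => u z t) i y /
            D.Wf (fun z => u z t) y) x -
        D.Wf (fun y => u y t) x * 𝓗 x -
        D.γ x * (D.inner2 D.γ (fun y => u y t) x / (2 * (D.γ x) ^ 2)) =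
            (∑ i, ∑ j, D.gInv (fun y => u y t) x i j *
                D.hess (fun y => u y t) i j x) -
              (2 * D.γ x + D.gradSq (fun y => u y t) x) /
                  (D.Wf (fun y => u y t) x) ^ 2 *
                (D.inner2 D.γ (fun y => u y t) x / (2 * D.γ x)) -
              D.Wf (fun y => u y t) x * 𝓗 x := by
    intro x t
    have hγ := (D.γ_pos x).ne'
    have hW := (Wf_pos D (fun y => u y t) x).ne'
    have hG : D.gradSq (fun y => u y t) x = D.Wf (fun y => u y t) x ^ 2 - D.γ x := by
      rw [Wf_sq]; ring
    rw [div_eq D (hsm t) x, hG]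
    field_simp
    ring
  refine ⟨?_, ?_, ?_⟩
  · simp only [LeafData.SolvesFlowDivOn, h1, h2]
  · simp only [LeafData.SolvesFlowDivOn, h2]
  · intro h x hx t ht
    rw [← h x hx t ht, hI]

end KMCF
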